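/- Every graph G with m edges has at most (2m)^{3/2}/6 triangles, i.e., 6·t(G) ≤ (2m)^{3/2}, where t(G) denotes the number of triangles in G. -/

import Mathlib

/-!
There are `6 t(G)` labelled copies of `K₃` in `G`. As points of `V³`, they have all three
coordinate-plane projections inside the set of `2m` darts, so the Loomis–Whitney inequality gives
`(6 t(G))² ≤ (2m)³`.
-/

section Counting

open Finset

variable {ι κ α β γ : Type*}

theorem sq_card_le_card_mul_card_filter_eq [DecidableEq κ] {s : Finset ι} {t : Finset κ}
    {f : ι → κ} (hf : ∀ i ∈ s, f i ∈ t) :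
    #s ^ 2 ≤ #t * #{p ∈ s ×ˢ s | f p.1 = f p.2} := by
  have hfiber (k : κ) (_ : k ∈ t) :
      #{p ∈ {p ∈ s ×ˢ s | f p.1 = f p.2} | f p.1 = k} = #{i ∈ s | f i = k} ^ 2 := by
    rw [sq, ← card_product]
    congr 1
    grind
  calc #s ^ 2 = (∑ k ∈ t, #{i ∈ s | f i = k}) ^ 2 := by rw [card_eq_sum_card_fiberwise hf]
    _ ≤ #t * ∑ k ∈ t, #{i ∈ s | f i = k} ^ 2 := sq_sum_le_card_mul_sum_sq
    _ = #t * #{p ∈ s ×ˢ s | f p.1 = f p.2} := by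
      rw [card_eq_sum_card_fiberwise (f := fun p : ι × ι ↦ f p.1) (t := t)
        (by intro p hp; grind), sum_congr rfl hfiber]

theorem loomis_whitney_three {s : Finset (α × β × γ)} {A : Finset (α × β)} {B : Finset (α × γ)}
    {C : Finset (β × γ)} (hA : ∀ p ∈ s, (p.1, p.2.1) ∈ A) (hB : ∀ p ∈ s, (p.1, p.2.2) ∈ B)
    (hC : ∀ p ∈ s, (p.2.1, p.2.2) ∈ C) :
    #s ^ 2 ≤ #A * #B * #C := by
  classical
  rw [mul_assoc, ← card_product]
  refine (sq_card_le_card_mul_card_filter_eq hA).trans (Nat.mul_le_mul_left _ ?_)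
  -- A pair of points `(a, b, c)`, `(a, b, c')` is determined by `(a, c)` and `(b, c')`.
  let crossed (p : (α × β × γ) × α × β × γ) : (α × γ) × β × γ :=
    ((p.1.1, p.1.2.2), p.2.2.1, p.2.2.2)
  refine card_le_card_of_injOn crossed (fun p hp ↦ ?mapsTo) ?injOn
  case mapsTo => grind
  case injOn =>
    rintro ⟨⟨a, b, c⟩, a', b', c'⟩ hp ⟨⟨x, y, z⟩, x', y', z'⟩ hq h
    grind

end Counting

section Graph

open Finset
open SimpleGraph (Copy Dart)
open scoped Nat

variable {V : Type*} (G : SimpleGraph V)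

theorem nonempty_dart_equiv_edgeSet_prod_bool : Nonempty (G.Dart ≃ G.edgeSet × Bool) := by
  have horient (e : G.edgeSet) : ∃ d : G.Dart, d.edge = e := by
    obtain ⟨⟨v, w⟩, h⟩ := e
    exact ⟨⟨(v, w), h⟩, rfl⟩
  choose d hd using horient
  let toDart (p : G.edgeSet × Bool) : G.Dart := if p.2 then d p.1 else (d p.1).symm
  have hedge (p) : (toDart p).edge = p.1 := by
    rcases p with ⟨e, _ | _⟩ <;> simp [toDart, hd]
  refine ⟨(Equiv.ofBijective toDart ⟨fun p q hpq ↦ ?_, fun a ↦ ?_⟩).symm⟩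
  · obtain ⟨e, b⟩ := p
    obtain ⟨e', b'⟩ := q
    obtain rfl : e = e' := Subtype.ext <|
      (hedge (e, b)).symm.trans ((congrArg Dart.edge hpq).trans (hedge (e', b')))
    cases b <;> cases b' <;> simp_all [toDart, Dart.symm_ne, (Dart.symm_ne _).symm]
  · rcases (G.dart_edge_eq_iff a _).1 (hd ⟨a.edge, a.edge_mem⟩).symm with h | h
    · exact ⟨(⟨a.edge, a.edge_mem⟩, true), h.symm⟩
    · exact ⟨(⟨a.edge, a.edge_mem⟩, false), h.symm⟩

instance finite_dart [Finite G.edgeSet] : Finite G.Dart := by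
  obtain ⟨e⟩ := nonempty_dart_equiv_edgeSet_prod_bool G
  exact .of_equiv _ e.symm

theorem nat_card_dart : Nat.card G.Dart = 2 * G.edgeSet.ncard := by
  obtain ⟨e⟩ := nonempty_dart_equiv_edgeSet_prod_bool G
  rw [Nat.card_congr e, Nat.card_prod, Nat.card_coe_set_eq, Nat.card_eq_fintype_card,
    Fintype.card_bool, mul_comm]

theorem nonempty_copy_top_equiv_sigma (ι : Type*) [Fintype ι] :
    Nonempty (Copy (⊤ : SimpleGraph ι) G ≃ Σ s : G.cliqueSet (Fintype.card ι), ι ≃ s.1) := by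
  let toCopy (p : Σ s : G.cliqueSet (Fintype.card ι), ι ≃ s.1) : Copy (⊤ : SimpleGraph ι) G :=
    ⟨⟨fun i ↦ p.2 i, fun {i j} hij ↦ p.1.2.isClique (p.2 i).2 (p.2 j).2
      (by simpa [Subtype.val_inj] using hij)⟩, Subtype.val_injective.comp p.2.injective⟩
  have hrange (p) : Set.range (toCopy p) = p.1.1 :=
    (EquivLike.range_comp Subtype.val p.2).trans Subtype.range_coe
  refine ⟨(Equiv.ofBijective toCopy ⟨?_, fun f ↦ ?_⟩).symm⟩
  · rintro ⟨s, e⟩ ⟨s', e'⟩ h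
    obtain rfl : s = s' := Subtype.ext <| coe_injective <| by rw [← hrange ⟨s, e⟩, h, hrange]
    obtain rfl : e = e' := Equiv.ext fun i ↦ Subtype.ext (DFunLike.congr_fun h i)
    rfl
  · let e : ι ≃ univ.map f.toEmbedding :=
      (Equiv.subtypeUnivEquiv mem_univ).symm.trans (univ.equivMap f.toEmbedding)
    exact ⟨⟨⟨_, SimpleGraph.isNClique_map_copy_top f⟩, e⟩, rfl⟩

theorem nat_card_copy_top (ι : Type*) [Fintype ι] :
    Nat.card (Copy (⊤ : SimpleGraph ι) G) =
      (Fintype.card ι)! * (G.cliqueSet (Fintype.card ι)).ncard := by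
  classical
  obtain ⟨e⟩ := nonempty_copy_top_equiv_sigma G ι
  have hperm (s : G.cliqueSet (Fintype.card ι)) : Nonempty ((ι ≃ s.1) ≃ Equiv.Perm ι) :=
    ⟨Equiv.equivCongr (.refl ι) (Fintype.equivOfCardEq (by simp [s.2.card_eq]))⟩
  rw [Nat.card_congr (e.trans <| (Equiv.sigmaCongrRight fun s ↦ (hperm s).some).trans
    (Equiv.sigmaEquivProd _ _)), Nat.card_prod, Nat.card_coe_set_eq, Nat.card_eq_fintype_card,
    Fintype.card_perm, mul_comm]

instance finite_copy_top (ι : Type*) [Finite ι] [Nontrivial ι] [Finite G.edgeSet] :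
    Finite (Copy (⊤ : SimpleGraph ι) G) := by
  have : Finite (⊤ : SimpleGraph ι).Dart := .of_injective _ Dart.toProd_injective
  refine .of_injective (fun f : Copy (⊤ : SimpleGraph ι) G ↦ f.toHom.mapDart) fun f f' h ↦
    DFunLike.ext _ _ fun i ↦ ?_
  obtain ⟨j, hij⟩ := exists_ne i
  exact congrArg (·.fst) (congrFun h ⟨(i, j), hij.symm⟩)

theorem sq_nat_card_copy_top_fin_three_le [Finite G.edgeSet] :
    Nat.card (Copy (⊤ : SimpleGraph (Fin 3)) G) ^ 2 ≤ Nat.card G.Dart ^ 3 := by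
  have := Fintype.ofFinite G.Dart
  have := Fintype.ofFinite (Copy (⊤ : SimpleGraph (Fin 3)) G)
  let darts : Finset (V × V) := univ.map ⟨_, Dart.toProd_injective (G := G)⟩
  let vertices (f : Copy (⊤ : SimpleGraph (Fin 3)) G) : V × V × V := (f 0, f 1, f 2)
  have hvertices : Function.Injective vertices := by
    intro f f' h
    simp only [vertices, Prod.mk.injEq] at h
    refine DFunLike.ext _ _ fun i ↦ ?_
    fin_cases i
    exacts [h.1, h.2.1, h.2.2]
  have hdart (f : Copy (⊤ : SimpleGraph (Fin 3)) G) {i j : Fin 3} (hij : i ≠ j) :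
      (f i, f j) ∈ darts :=
    mem_map_of_mem _ (mem_univ (f.toHom.mapDart ⟨(i, j), hij⟩))
  have h := loomis_whitney_three (s := univ.map ⟨vertices, hvertices⟩) (A := darts) (B := darts)
    (C := darts) (by simp [vertices, hdart]) (by simp [vertices, hdart]) (by simp [vertices, hdart])
  simpa [darts, Nat.card_eq_fintype_card, ← pow_succ, ← sq] using h

theorem six_triangles_le_rpow_general {V : Type*} (G : SimpleGraph V) [Finite G.edgeSet] :
    6 * ((G.cliqueSet 3).ncard : ℝ) ≤ (2 * (G.edgeSet.ncard : ℝ)) ^ ((3 : ℝ) / 2) := by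
  have hcopies : Nat.card (Copy (⊤ : SimpleGraph (Fin 3)) G) = 6 * (G.cliqueSet 3).ncard := by
    simpa [Nat.factorial] using nat_card_copy_top G (Fin 3)
  have hsq : (6 * ((G.cliqueSet 3).ncard : ℝ)) ^ 2 ≤ (2 * (G.edgeSet.ncard : ℝ)) ^ 3 := by
    have h := sq_nat_card_copy_top_fin_three_le G
    rw [hcopies, nat_card_dart] at h
    exact_mod_cast h
  calc 6 * ((G.cliqueSet 3).ncard : ℝ) ≤ √((2 * (G.edgeSet.ncard : ℝ)) ^ 3) :=
      Real.le_sqrt_of_sq_le hsq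
    _ = (2 * (G.edgeSet.ncard : ℝ)) ^ ((3 : ℝ) / 2) := by
      rw [Real.sqrt_eq_rpow, ← Real.rpow_natCast_mul (by positivity)]
      norm_num

end Graph

/-- A graph with `m` edges has at most `(2m)^{3/2}/6` triangles:
`6 t(G) ≤ (2m)^{3/2}`. -/
theorem six_triangles_le_rpow (n : ℕ) (G : SimpleGraph (Fin n))
    [DecidableRel G.Adj] :
    (6 * ((G.cliqueFinset 3).card : ℝ))
      ≤ (2 * (G.edgeFinset.card : ℝ)) ^ ((3 : ℝ) / 2) := by
  simpa only [← G.coe_cliqueFinset, ← G.coe_edgeFinset, Set.ncard_coe_finset] using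
    six_triangles_le_rpow_general G
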